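/- arXiv:math/0512621 — 2 statements merged into one kernel-verified Lean document; each statement's English description precedes it below -/
import Mathlib

section
/- There is no indecomposable representation of the Kronecker quiver with dimension vector (a, b) when |a - b| ≥ 2. Specifically, every representation ((V_0, V_1), (f, g)) with |dim V_0 - dim V_1| ≥ 2 is decomposable. -/
noncomputable section

/-- A representation of the Kronecker quiver: two complex vector spaces and two
linear maps `f, g : V0 → V1`. -/
structure KronRep : Type 1 where
  V0 : Type
  V1 : Type
  [acg0 : AddCommGroup V0]
  [acg1 : AddCommGroup V1]
  [mod0 : Module ℂ V0]
  [mod1 : Module ℂ V1]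
  f : V0 →ₗ[ℂ] V1
  g : V0 →ₗ[ℂ] V1

attribute [instance] KronRep.acg0 KronRep.acg1 KronRep.mod0 KronRep.mod1

/-- Isomorphism of Kronecker quiver representations. -/
def KronRep.Iso (M N : KronRep) : Prop :=
  ∃ (e0 : M.V0 ≃ₗ[ℂ] N.V0) (e1 : M.V1 ≃ₗ[ℂ] N.V1),
    (∀ x, e1 (M.f x) = N.f (e0 x)) ∧ (∀ x, e1 (M.g x) = N.g (e0 x))

/-- Direct sum of two Kronecker quiver representations. -/
def KronRep.prod (M N : KronRep) : KronRep where
  V0 := M.V0 × N.V0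
  V1 := M.V1 × N.V1
  f := M.f.prodMap N.f
  g := M.g.prodMap N.g

/-- The zero representation. -/
def KronRep.IsZero (M : KronRep) : Prop :=
  (∀ x : M.V0, x = 0) ∧ (∀ x : M.V1, x = 0)

/-- A representation is indecomposable if it is nonzero and any direct sum
decomposition has a zero summand. -/
def KronRep.Indecomposable (M : KronRep) : Prop :=
  ¬ M.IsZero ∧ ∀ N P : KronRep, M.Iso (N.prod P) → N.IsZero ∨ P.IsZero

/-- The representation `((ℂ, ℂ), (r, r̄))` given by a pair of scalars. -/
def scalarRep (r rb : ℂ) : KronRep where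
  V0 := ℂ
  V1 := ℂ
  f := r • LinearMap.id
  g := rb • LinearMap.id

/-- Nontrivial pair of idempotents commuting with the two maps. -/
def KSplit {V W : Type} [AddCommGroup V] [AddCommGroup W] [Module ℂ V] [Module ℂ W]
    (f g : V →ₗ[ℂ] W) : Prop :=
  ∃ (p : V →ₗ[ℂ] V) (q : W →ₗ[ℂ] W),
    (∀ x, p (p x) = p x) ∧ (∀ y, q (q y) = q y) ∧
    (∀ x, q (f x) = f (p x)) ∧ (∀ x, q (g x) = g (p x)) ∧
    ¬ ((∀ x, p x = 0) ∧ (∀ y, q y = 0)) ∧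
    ¬ ((∀ x, p x = x) ∧ (∀ y, q y = y))

theorem ksplit_left (n : ℕ) : ∀ (V W : Type) [AddCommGroup V] [AddCommGroup W]
    [Module ℂ V] [Module ℂ W] [Module.Finite ℂ V] [Module.Finite ℂ W]
    (f g : V →ₗ[ℂ] W), Module.finrank ℂ V ≤ n →
    Module.finrank ℂ W + 2 ≤ Module.finrank ℂ V → KSplit f g := by
  induction n with
  | zero => intro V W _ _ _ _ _ _ f g h1 h2; omega
  | succ n ih =>
    intro V W _ _ _ _ _ _ f g h1 h2
    by_cases hinj : Function.Injective (f.prod g)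
    · let R := LinearMap.range (f.prod g)
      have hR : Module.finrank ℂ R = Module.finrank ℂ V := LinearMap.finrank_range_of_inj hinj
      have hq := Submodule.finrank_quotient_add_finrank R
      rw [Module.finrank_prod] at hq
      obtain ⟨p, q, hp, hq', hf, hg, hz, hi⟩ :=
        ih W ((W × W) ⧸ R) (R.mkQ ∘ₗ LinearMap.inl ℂ W W) (R.mkQ ∘ₗ LinearMap.inr ℂ W W)
          (by omega) (by omega)
      have key : ∀ z : W × W, q (R.mkQ z) = R.mkQ (p z.1, p z.2) := by
        rintro ⟨a, b⟩
        have e : ∀ a b : W, R.mkQ (a, b) =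
          (R.mkQ ∘ₗ LinearMap.inl ℂ W W) a + (R.mkQ ∘ₗ LinearMap.inr ℂ W W) b := by
          intro a b
          simp only [LinearMap.comp_apply, ← map_add]
          simp
        rw [e, map_add, hf, hg, ← e]
      obtain ⟨s, hs⟩ := LinearMap.exists_leftInverse_of_injective (f.prod g)
        (LinearMap.ker_eq_bot.2 hinj)
      have hs' : ∀ x, s (f x, g x) = x := fun x => LinearMap.congr_fun hs x
      let e : V →ₗ[ℂ] V := s ∘ₗ (p.prodMap p) ∘ₗ (f.prod g)
      have he : ∀ x, e x = s (p (f x), p (g x)) := fun x => rfl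
      have hφ : ∀ x, f (e x) = p (f x) ∧ g (e x) = p (g x) := by
        intro x
        have : (p (f x), p (g x)) ∈ R := by
          have h0 : R.mkQ (f x, g x) = 0 := by
            rw [Submodule.mkQ_apply, Submodule.Quotient.mk_eq_zero]
            exact ⟨x, rfl⟩
          have := key (f x, g x)
          rw [h0, map_zero] at this
          rw [← Submodule.Quotient.mk_eq_zero, ← Submodule.mkQ_apply]
          exact this.symm
        obtain ⟨y, hy⟩ := this
        have hy' : (f y, g y) = (p (f x), p (g x)) := hy
        have : e x = y := by rw [he, ← hy', hs']
        rw [this]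
        exact Prod.ext_iff.1 hy'
      refine ⟨e, p, ?_, hp, fun x => (hφ x).1.symm, fun x => (hφ x).2.symm, ?_, ?_⟩
      · intro x
        rw [he (e x), (hφ x).1, (hφ x).2, hp, hp, he]
      · rintro ⟨-, h⟩
        refine hz ⟨h, fun y => ?_⟩
        obtain ⟨z, rfl⟩ := R.mkQ_surjective y
        rw [key, h, h]; exact map_zero _
      · rintro ⟨-, h⟩
        refine hi ⟨h, fun y => ?_⟩
        obtain ⟨z, rfl⟩ := R.mkQ_surjective y
        rw [key, h, h]
    · rw [← LinearMap.ker_eq_bot, Submodule.eq_bot_iff] at hinj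
      push Not at hinj
      obtain ⟨k, hk, hk0⟩ := hinj
      have hk' : (f k, g k) = 0 := hk
      obtain ⟨hfk, hgk⟩ := Prod.ext_iff.1 hk'
      simp only [Prod.fst_zero, Prod.snd_zero] at hfk hgk
      obtain ⟨l, hl⟩ := Module.Projective.exists_dual_ne_zero ℂ hk0
      refine ⟨((l k)⁻¹ • l).smulRight k, 0, ?_, ?_, ?_, ?_, ?_, ?_⟩
      · intro x; simp [hl]
      · simp
      · simp [hfk]
      · simp [hgk]
      · rintro ⟨h, -⟩
        have := h k
        simp [hl, hk0] at this
      · rintro ⟨h, -⟩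
        have := finrank_le_one k (fun x => ⟨_, h x⟩)
        omega

theorem ksplit_right (n : ℕ) : ∀ (V W : Type) [AddCommGroup V] [AddCommGroup W]
    [Module ℂ V] [Module ℂ W] [Module.Finite ℂ V] [Module.Finite ℂ W]
    (f g : V →ₗ[ℂ] W), Module.finrank ℂ W ≤ n →
    Module.finrank ℂ V + 2 ≤ Module.finrank ℂ W → KSplit f g := by
  induction n with
  | zero => intro V W _ _ _ _ _ _ f g h1 h2; omega
  | succ n ih =>
    intro V W _ _ _ _ _ _ f g h1 h2
    by_cases hsurj : Function.Surjective (f.coprod g)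
    · let K := LinearMap.ker (f.coprod g)
      have hK := LinearMap.finrank_range_add_finrank_ker (f.coprod g)
      rw [LinearMap.range_eq_top.2 hsurj, finrank_top, Module.finrank_prod] at hK
      obtain ⟨p, q, hp, hq, hf, hg, hz, hi⟩ :=
        ih K V (LinearMap.fst ℂ V V ∘ₗ K.subtype) (LinearMap.snd ℂ V V ∘ₗ K.subtype)
          (by omega) (by change Module.finrank ℂ (LinearMap.ker (f.coprod g)) + 2 ≤ _; omega)
      have hf' : ∀ z : K, q z.1.1 = (p z).1.1 := hf
      have hg' : ∀ z : K, q z.1.2 = (p z).1.2 := hg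
      obtain ⟨s, hs⟩ := LinearMap.exists_rightInverse_of_surjective (f.coprod g)
        (LinearMap.range_eq_top.2 hsurj)
      have hs' : ∀ y, f (s y).1 + g (s y).2 = y := fun y => LinearMap.congr_fun hs y
      let e : W →ₗ[ℂ] W := (f.coprod g) ∘ₗ (q.prodMap q) ∘ₗ s
      have he : ∀ y, e y = f (q (s y).1) + g (q (s y).2) := fun y => rfl
      have key : ∀ a b : V, e (f a + g b) = f (q a) + g (q b) := by
        intro a b
        have hm : s (f a + g b) - (a, b) ∈ K := by
          change f.coprod g _ = 0
          have := hs' (f a + g b)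
          rw [map_sub, sub_eq_zero]
          exact this
        have h1 := hf' ⟨_, hm⟩
        have h2 := hg' ⟨_, hm⟩
        have h3 : f (p ⟨_, hm⟩).1.1 + g (p ⟨_, hm⟩).1.2 = 0 := (p ⟨_, hm⟩).2
        rw [← h1, ← h2] at h3
        simp only [Prod.fst_sub, Prod.snd_sub, map_sub] at h3
        rw [he, ← sub_eq_zero, ← h3]
        abel
      refine ⟨q, e, hq, ?_, ?_, ?_, ?_, ?_⟩
      · intro y
        rw [he y, key, hq, hq]
      · intro x
        simpa using key x 0
      · intro x
        simpa using key 0 x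
      · rintro ⟨h, -⟩
        refine hz ⟨fun z => ?_, h⟩
        apply Subtype.ext
        apply Prod.ext
        · rw [← hf', h]; rfl
        · rw [← hg', h]; rfl
      · rintro ⟨h, -⟩
        refine hi ⟨fun z => ?_, h⟩
        apply Subtype.ext
        apply Prod.ext
        · rw [← hf', h]
        · rw [← hg', h]
    · rw [← LinearMap.range_eq_top] at hsurj
      obtain ⟨l, hl0, hl⟩ := Submodule.exists_le_ker_of_lt_top _ (lt_top_iff_ne_top.2 hsurj)
      have hlf : ∀ x, l (f x) = 0 := fun x => hl ⟨(x, 0), by simp⟩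
      have hlg : ∀ x, l (g x) = 0 := fun x => hl ⟨(0, x), by simp⟩
      obtain ⟨k, hk⟩ : ∃ k, l k ≠ 0 := by
        by_contra! h
        exact hl0 (LinearMap.ext h)
      have hk0 : k ≠ 0 := by rintro rfl; simp at hk
      refine ⟨0, ((l k)⁻¹ • l).smulRight k, ?_, ?_, ?_, ?_, ?_, ?_⟩
      · simp
      · intro x; simp [hk]
      · simp [hlf]
      · simp [hlg]
      · rintro ⟨-, h⟩
        have := h k
        simp [hk, hk0] at this
      · rintro ⟨-, h⟩
        have := finrank_le_one k (fun x => ⟨_, h x⟩)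
        omega

theorem KronRep.not_indec_of_ksplit (M : KronRep) (h : KSplit M.f M.g) :
    ¬ M.Indecomposable := by
  rintro ⟨-, hM⟩
  obtain ⟨p, q, hp, hq, hf, hg, hz, hi⟩ := h
  have cp : IsCompl (LinearMap.range p) (LinearMap.ker p) :=
    LinearMap.IsIdempotentElem.isCompl (LinearMap.ext hp)
  have cq : IsCompl (LinearMap.range q) (LinearMap.ker q) :=
    LinearMap.IsIdempotentElem.isCompl (LinearMap.ext hq)
  have rf : ∀ x ∈ LinearMap.range p, M.f x ∈ LinearMap.range q := by
    rintro _ ⟨x, rfl⟩; exact ⟨M.f x, hf x⟩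
  have rg : ∀ x ∈ LinearMap.range p, M.g x ∈ LinearMap.range q := by
    rintro _ ⟨x, rfl⟩; exact ⟨M.g x, hg x⟩
  have kf : ∀ x ∈ LinearMap.ker p, M.f x ∈ LinearMap.ker q := by
    intro x hx
    rw [LinearMap.mem_ker] at *
    rw [hf, hx, map_zero]
  have kg : ∀ x ∈ LinearMap.ker p, M.g x ∈ LinearMap.ker q := by
    intro x hx
    rw [LinearMap.mem_ker] at *
    rw [hg, hx, map_zero]
  let N : KronRep := ⟨LinearMap.range p, LinearMap.range q, M.f.restrict rf, M.g.restrict rg⟩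
  let P : KronRep := ⟨LinearMap.ker p, LinearMap.ker q, M.f.restrict kf, M.g.restrict kg⟩
  let E0 := Submodule.prodEquivOfIsCompl _ _ cp
  let E1 := Submodule.prodEquivOfIsCompl _ _ cq
  have hiso : M.Iso (N.prod P) := by
    refine ⟨E0.symm, E1.symm, ?_, ?_⟩
    · intro x
      obtain ⟨⟨a, b⟩, rfl⟩ := E0.surjective x
      change E1.symm (M.f (E0 (a, b))) =
        ((M.f.restrict rf).prodMap (M.f.restrict kf)) (E0.symm (E0 (a, b)))
      rw [LinearEquiv.symm_apply_apply, LinearEquiv.symm_apply_eq]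
      exact map_add M.f a.1 b.1
    · intro x
      obtain ⟨⟨a, b⟩, rfl⟩ := E0.surjective x
      change E1.symm (M.g (E0 (a, b))) =
        ((M.g.restrict rg).prodMap (M.g.restrict kg)) (E0.symm (E0 (a, b)))
      rw [LinearEquiv.symm_apply_apply, LinearEquiv.symm_apply_eq]
      exact map_add M.g a.1 b.1
  rcases hM N P hiso with h | h
  · refine hz ⟨fun x => ?_, fun y => ?_⟩
    · exact congrArg Subtype.val (h.1 ⟨p x, x, rfl⟩)
    · exact congrArg Subtype.val (h.2 ⟨q y, y, rfl⟩)
  · refine hi ⟨fun x => ?_, fun y => ?_⟩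
    · have := congrArg Subtype.val (h.1 ⟨x - p x, by rw [LinearMap.mem_ker, map_sub, hp, sub_self]⟩)
      exact (sub_eq_zero.1 this).symm
    · have := congrArg Subtype.val (h.2 ⟨y - q y, by rw [LinearMap.mem_ker, map_sub, hq, sub_self]⟩)
      exact (sub_eq_zero.1 this).symm

/-- there is no indecomposable representation of the Kronecker
quiver whose dimension vector `(dim V0, dim V1)` satisfies `|dim V0 - dim V1| ≥ 2`:
every such (finite-dimensional) representation is decomposable. -/
theorem no_indecomposable_dim_gap_ge_two (M : KronRep)
    (h0 : Module.Finite ℂ M.V0) (h1 : Module.Finite ℂ M.V1)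
    (hgap : 2 ≤ |(Module.finrank ℂ M.V0 : ℤ) - (Module.finrank ℂ M.V1 : ℤ)|) :
    ¬ M.Indecomposable := by
  apply M.not_indec_of_ksplit
  rcases le_abs.1 hgap with h | h
  · exact ksplit_left _ M.V0 M.V1 M.f M.g le_rfl (by omega)
  · exact ksplit_right _ M.V0 M.V1 M.f M.g le_rfl (by omega)
end
end

section
/- Let s with 1 ≤ s ≤ p−1, a = ±1, and z = (z_1 : z_2) ∈ CP^1. The (p)-dimensional space with basis {a_n : 0 ≤ n ≤ s−1} ∪ {x_k : 0 ≤ k ≤ p−s−1} and action K a_n = a q^{s−1−2n}a_n, K x_k = −a q^{p−s−1−2k}x_k, E a_n = a[n][s−n]a_{n−1} for n ≥ 1, E a_0 = z_2 x_{p−s−1}, E x_k = −a[k][p−s−k]x_{k−1} (x_{−1}=0), F a_n = a_{n+1} for n ≤ s−2, F a_{s−1} = z_1 x_0, F x_k = x_{k+1} (x_{p−s}=0), defines a U_q(sl2)-module O^a_s(1,z): all defining relations of U_q(sl2) hold. -/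
noncomputable section

/-- `q = e^{iπ/p}`. -/
def qc (p : ℕ) : ℂ := Complex.exp (Complex.I * Real.pi / p)

/-- The q-integer `[n] = (q^n - q^{-n})/(q - q^{-1})`. -/
def qint (p n : ℕ) : ℂ := (qc p ^ n - (qc p)⁻¹ ^ n) / (qc p - (qc p)⁻¹)

/-- Basis index of `O^a_s(1,z)`: `inl n ↦ a_n` (`0 ≤ n ≤ s-1`),
`inr k ↦ x_k` (`0 ≤ k ≤ p-s-1`). -/
abbrev OIdx (p s : ℕ) : Type := Fin s ⊕ Fin (p - s)

/-- Action of `K` on `O^a_s(1,z)`: `K a_n = a q^{s-1-2n} a_n`,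
`K x_k = -a q^{p-s-1-2k} x_k`. -/
def OK (p s : ℕ) (a : ℂ) : Matrix (OIdx p s) (OIdx p s) ℂ :=
  Matrix.diagonal fun i =>
    match i with
    | Sum.inl n => a * qc p ^ ((s : ℤ) - 1 - 2 * (n : ℤ))
    | Sum.inr k => -a * qc p ^ (((p - s : ℕ) : ℤ) - 1 - 2 * (k : ℤ))

/-- The inverse of the action of `K` on `O^a_s(1,z)`. -/
def OKinv (p s : ℕ) (a : ℂ) : Matrix (OIdx p s) (OIdx p s) ℂ :=
  Matrix.diagonal fun i =>
    match i with
    | Sum.inl n => (a * qc p ^ ((s : ℤ) - 1 - 2 * (n : ℤ)))⁻¹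
    | Sum.inr k => (-a * qc p ^ (((p - s : ℕ) : ℤ) - 1 - 2 * (k : ℤ)))⁻¹

/-- Action of `E` on `O^a_s(1,z)`: `E a_n = a[n][s-n]a_{n-1}` for `n ≥ 1`,
`E a_0 = z₂ x_{p-s-1}`, `E x_k = -a[k][p-s-k]x_{k-1}` (`x_{-1} = 0`). -/
def OE (p s : ℕ) (a z₂ : ℂ) : Matrix (OIdx p s) (OIdx p s) ℂ :=
  Matrix.of fun i j =>
    match i, j with
    | Sum.inl m, Sum.inl n =>
        if (m : ℕ) + 1 = (n : ℕ) then a * qint p n * qint p (s - (n : ℕ)) else 0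
    | Sum.inr k, Sum.inl n =>
        if (n : ℕ) = 0 ∧ (k : ℕ) = p - s - 1 then z₂ else 0
    | Sum.inr m, Sum.inr k =>
        if (m : ℕ) + 1 = (k : ℕ) then -a * qint p k * qint p (p - s - (k : ℕ)) else 0
    | Sum.inl _, Sum.inr _ => 0

/-- Action of `F` on `O^a_s(1,z)`: `F a_n = a_{n+1}` for `n ≤ s-2`,
`F a_{s-1} = z₁ x_0`, `F x_k = x_{k+1}` (`x_{p-s} = 0`). -/
def OF (p s : ℕ) (z₁ : ℂ) : Matrix (OIdx p s) (OIdx p s) ℂ :=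
  Matrix.of fun i j =>
    match i, j with
    | Sum.inl m, Sum.inl n => if (m : ℕ) = (n : ℕ) + 1 then 1 else 0
    | Sum.inr k, Sum.inl n => if (n : ℕ) = s - 1 ∧ (k : ℕ) = 0 then z₁ else 0
    | Sum.inr m, Sum.inr k => if (m : ℕ) = (k : ℕ) + 1 then 1 else 0
    | Sum.inl _, Sum.inr _ => 0

theorem aux_nilp {ι : Type*} [Fintype ι] [DecidableEq ι] (M : Matrix ι ι ℂ) (h : ι → ℕ) (p : ℕ)
    (hb : ∀ i, h i < p) (hM : ∀ i j, M i j ≠ 0 → h i < h j) : M ^ p = 0 := by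
  have key : ∀ k : ℕ, ∀ i j, (M ^ k) i j ≠ 0 → h i + k ≤ h j := by
    intro k
    induction k with
    | zero =>
      intro i j hij
      rw [pow_zero, Matrix.one_apply] at hij
      by_cases e : i = j
      · simp [e]
      · simp [e] at hij
    | succ k ih =>
      intro i j hij
      rw [pow_succ, Matrix.mul_apply] at hij
      obtain ⟨l, _, hl⟩ := Finset.exists_ne_zero_of_sum_ne_zero hij
      have h1 := ih i l (left_ne_zero_of_mul hl)
      have h2 := hM l j (right_ne_zero_of_mul hl)
      omega
  ext i j
  by_contra hne
  have := key p i j hne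
  have := hb j
  omega

theorem qc_ne (p : ℕ) : qc p ≠ 0 := Complex.exp_ne_zero _

theorem qc_pow (p : ℕ) (hp : 2 ≤ p) : qc p ^ p = -1 := by
  have : (p : ℂ) ≠ 0 := by exact_mod_cast (by omega : p ≠ 0)
  rw [qc, ← Complex.exp_nat_mul, mul_div_cancel₀ _ this, mul_comm, Complex.exp_pi_mul_I]

theorem qc_sub_ne (p : ℕ) (hp : 2 ≤ p) : qc p - (qc p)⁻¹ ≠ 0 := by
  intro h
  have h0 : (p : ℂ) ≠ 0 := by exact_mod_cast (by omega : p ≠ 0)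
  have hq := qc_ne p
  have h2 : qc p ^ 2 = 1 := by
    field_simp at h
    linear_combination h
  rw [qc, ← Complex.exp_nat_mul, Complex.exp_eq_one_iff] at h2
  obtain ⟨n, hn⟩ := h2
  have hpi : (Real.pi : ℂ) ≠ 0 := by exact_mod_cast Real.pi_ne_zero
  have h3 : (1 : ℂ) = n * p := by
    field_simp at hn
    push_cast at hn
    linear_combination hn / 2
  have h5 : (1 : ℤ) = n * p := by exact_mod_cast h3
  have h6 : (p : ℤ) ∣ 1 := ⟨n, by rw [h5]; ring⟩
  have := Int.le_of_dvd one_pos h6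
  omega

theorem qint_zero (p : ℕ) : qint p 0 = 0 := by simp [qint]

/-- The weight identity. -/
theorem qint_id (p : ℕ) (hp : 2 ≤ p) (s n : ℕ) (hn : n < s) :
    qint p (n + 1) * qint p (s - (n + 1)) - qint p n * qint p (s - n) =
      (qc p - (qc p)⁻¹)⁻¹ * (qc p ^ ((s : ℤ) - 1 - 2 * (n : ℤ)) -
        (qc p ^ ((s : ℤ) - 1 - 2 * (n : ℤ)))⁻¹) := by
  obtain ⟨m, rfl⟩ := Nat.exists_eq_add_of_le hn
  have hq := qc_ne p
  have hd := qc_sub_ne p hp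
  have e1 : n.succ + m - (n + 1) = m := by omega
  have e2 : n.succ + m - n = m + 1 := by omega
  have e3 : (((n.succ + m : ℕ) : ℤ) - 1 - 2 * (n : ℤ)) = (m : ℤ) - n := by push_cast; ring
  rw [e1, e2, e3, zpow_sub₀ hq]
  simp only [zpow_natCast, qint, pow_succ, inv_pow]
  have hX : qc p ^ n ≠ 0 := pow_ne_zero _ hq
  have hY : qc p ^ m ≠ 0 := pow_ne_zero _ hq
  generalize qc p ^ n = X at *
  generalize qc p ^ m = Y at *
  generalize qc p = q at *
  have hd' : q ^ 2 - 1 ≠ 0 := by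
    intro h; apply hd; field_simp; linear_combination h
  field_simp
  ring

theorem EF_inl (p s : ℕ) (hs1 : 1 ≤ s) (a z₁ z₂ : ℂ) (i : OIdx p s) (n : Fin s) :
    (OE p s a z₂ * OF p s z₁) i (Sum.inl n) =
      if i = Sum.inl n then a * (qint p (n + 1) * qint p (s - (n + 1))) else 0 := by
  rw [Matrix.mul_apply]
  by_cases h : (n : ℕ) + 1 < s
  · rw [Finset.sum_eq_single (Sum.inl ⟨n + 1, h⟩)]
    · rcases i with i | i <;> simp [OE, OF, Fin.ext_iff, mul_assoc]
    · rintro (k | k) _ hk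
      · simp [OF, Fin.ext_iff] at hk ⊢
        intro h; omega
      · simp [OF]
        intro h; omega
    · simp
  · have hn : s - ((n : ℕ) + 1) = 0 := by omega
    rw [hn, qint_zero]
    simp only [mul_zero, ite_self]
    apply Finset.sum_eq_zero
    rintro (k | k) _
    · have : ¬ ((k : ℕ) = n + 1) := by omega
      simp [OF, this]
    · rcases i with i | i
      · simp [OE]
      · simp only [OE, OF, Matrix.of_apply]
        split_ifs <;> first | omega | simp

theorem EF_inr (p s : ℕ) (a z₁ z₂ : ℂ) (i : OIdx p s) (n : Fin (p - s)) :
    (OE p s a z₂ * OF p s z₁) i (Sum.inr n) =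
      if i = Sum.inr n then -a * (qint p (n + 1) * qint p (p - s - (n + 1))) else 0 := by
  rw [Matrix.mul_apply]
  by_cases h : (n : ℕ) + 1 < p - s
  · rw [Finset.sum_eq_single (Sum.inr ⟨n + 1, h⟩)]
    · rcases i with i | i <;> simp [OE, OF, Fin.ext_iff, mul_assoc]
    · rintro (k | k) _ hk
      · simp [OF]
      · simp [OF, Fin.ext_iff] at hk ⊢
        intro h; omega
    · simp
  · have hn : p - s - ((n : ℕ) + 1) = 0 := by omega
    rw [hn, qint_zero]
    simp only [mul_zero, ite_self]
    apply Finset.sum_eq_zero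
    rintro (k | k) _
    · simp [OF]
    · have : ¬ ((k : ℕ) = n + 1) := by omega
      simp [OF, this]

theorem FE_inl (p s : ℕ) (a z₁ z₂ : ℂ) (i : OIdx p s) (n : Fin s) :
    (OF p s z₁ * OE p s a z₂) i (Sum.inl n) =
      if i = Sum.inl n then a * (qint p n * qint p (s - n)) else 0 := by
  rw [Matrix.mul_apply]
  by_cases h : (n : ℕ) = 0
  · rw [h, qint_zero]
    simp only [zero_mul, mul_zero, ite_self]
    apply Finset.sum_eq_zero
    rintro (k | k) _
    · have : ¬ ((k : ℕ) + 1 = n) := by omega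
      simp [OE, this]
    · rcases i with i | i
      · simp [OF]
      · simp only [OE, OF, Matrix.of_apply]
        split_ifs <;> first | omega | simp
  · rw [Finset.sum_eq_single (Sum.inl ⟨n - 1, by omega⟩)]
    · have e : (n : ℕ) - 1 + 1 = n := by omega
      rcases i with i | i
      · simp [OE, OF, Fin.ext_iff, mul_assoc, e]
      · simp only [OE, OF, Matrix.of_apply, e]
        have : ¬ ((n : ℕ) - 1 = s - 1) := by omega
        simp [this]
    · rintro (k | k) _ hk
      · simp [OE, Fin.ext_iff] at hk ⊢
        intro h; omega
      · simp [OE, h]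
    · simp

theorem FE_inr (p s : ℕ) (a z₁ z₂ : ℂ) (i : OIdx p s) (n : Fin (p - s)) :
    (OF p s z₁ * OE p s a z₂) i (Sum.inr n) =
      if i = Sum.inr n then -a * (qint p n * qint p (p - s - n)) else 0 := by
  rw [Matrix.mul_apply]
  by_cases h : (n : ℕ) = 0
  · rw [h, qint_zero]
    simp only [zero_mul, mul_zero, ite_self]
    apply Finset.sum_eq_zero
    rintro (k | k) _
    · simp [OE]
    · have : ¬ ((k : ℕ) + 1 = n) := by omega
      simp [OE, this]
  · rw [Finset.sum_eq_single (Sum.inr ⟨n - 1, by omega⟩)]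
    · have e : (n : ℕ) - 1 + 1 = n := by omega
      rcases i with i | i
      · simp [OF]
      · simp [OE, OF, Fin.ext_iff, mul_assoc, e]
        split_ifs <;> simp
    · rintro (k | k) _ hk
      · simp [OE]
      · simp [OE, Fin.ext_iff] at hk ⊢
        intro h; omega
    · simp

theorem zpow_aux (p : ℕ) (x y : ℤ) (e : x = y + 2) : qc p ^ x = qc p ^ 2 * qc p ^ y := by
  rw [e, zpow_add₀ (qc_ne p), mul_comm]; norm_cast

theorem zpow_aux2 (p : ℕ) (hp : 2 ≤ p) (x y : ℤ) (e : x = y + p) : qc p ^ x = - qc p ^ y := by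
  rw [e, zpow_add₀ (qc_ne p), zpow_natCast, qc_pow p hp]; ring

/-- for `1 ≤ s ≤ p−1`, `a = ±1` and `z = (z₁ : z₂) ∈ ℂP¹`, the
formulas above define a `U_q(sl2)`-module `O^a_s(1,z)`: all defining relations
of `U_q(sl2)` hold for the operators. -/
theorem O_module_well_defined (p s : ℕ) (hp : 2 ≤ p) (hs1 : 1 ≤ s)
    (hsp : s ≤ p - 1) (a : ℂ) (ha : a = 1 ∨ a = -1)
    (z₁ z₂ : ℂ) (hz : ¬(z₁ = 0 ∧ z₂ = 0)) :
    OK p s a * OKinv p s a = 1 ∧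
    OE p s a z₂ ^ p = 0 ∧
    OF p s z₁ ^ p = 0 ∧
    OK p s a ^ (2 * p) = 1 ∧
    OK p s a * OE p s a z₂ * OKinv p s a = (qc p ^ 2) • OE p s a z₂ ∧
    OK p s a * OF p s z₁ * OKinv p s a = ((qc p ^ 2)⁻¹) • OF p s z₁ ∧
    OE p s a z₂ * OF p s z₁ - OF p s z₁ * OE p s a z₂ =
      ((qc p - (qc p)⁻¹)⁻¹) • (OK p s a - OKinv p s a) := by
  have hq := qc_ne p
  have hz' : ∀ x : ℤ, qc p ^ x ≠ 0 := fun x => zpow_ne_zero _ hq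
  have ha0 : a ≠ 0 := by rcases ha with rfl | rfl <;> simp
  have hai : a⁻¹ = a := by rcases ha with rfl | rfl <;> norm_num
  have hk : ∀ x : ℤ, (a * qc p ^ x) ^ (2 * p) = 1 := by
    intro x
    have h1 : (qc p ^ x) ^ (2 * p) = 1 := by
      rw [← zpow_natCast, ← zpow_mul, mul_comm, zpow_mul, zpow_natCast, mul_comm 2 p, pow_mul,
        qc_pow p hp]
      norm_num
    have h2 : a ^ (2 * p) = 1 := by
      rw [pow_mul]; rcases ha with rfl | rfl <;> norm_num
    rw [mul_pow, h1, h2, one_mul]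
  refine ⟨?_, ?_, ?_, ?_, ?_, ?_, ?_⟩
  · rw [OK, OKinv, Matrix.diagonal_mul_diagonal, ← Matrix.diagonal_one]
    congr 1
    funext i
    rcases i with n | n
    · exact mul_inv_cancel₀ (mul_ne_zero ha0 (hz' _))
    · exact mul_inv_cancel₀ (mul_ne_zero (neg_ne_zero.mpr ha0) (hz' _))
  · apply aux_nilp _ (fun i => Sum.elim (fun n : Fin s => p - s + n) (fun k : Fin (p - s) => (k : ℕ)) i)
    · rintro (i | i) <;> simp only [Sum.elim_inl, Sum.elim_inr] <;> omega
    · rintro (i | i) (j | j) <;> simp only [OE, Matrix.of_apply, Sum.elim_inl, Sum.elim_inr] <;>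
        intro h <;> first | (exact absurd rfl h) | (split_ifs at h <;> first | omega | exact absurd rfl h)
  · apply aux_nilp _ (fun i => p - 1 - Sum.elim (fun n : Fin s => (n : ℕ)) (fun k : Fin (p - s) => s + (k : ℕ)) i)
    · rintro (i | i) <;> simp only [Sum.elim_inl, Sum.elim_inr] <;> omega
    · rintro (i | i) (j | j) <;> simp only [OF, Matrix.of_apply, Sum.elim_inl, Sum.elim_inr] <;>
        intro h <;> first | (exact absurd rfl h) | (split_ifs at h <;> first | omega | exact absurd rfl h)
  · rw [OK, Matrix.diagonal_pow, ← Matrix.diagonal_one]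
    congr 1
    funext i
    rcases i with n | n
    · exact hk _
    · simp only [Pi.pow_apply, neg_mul]
      rw [Even.neg_pow (even_two_mul p)]
      exact hk _
  · ext i j
    rw [OK, OKinv, Matrix.mul_diagonal, Matrix.diagonal_mul, Matrix.smul_apply, smul_eq_mul]
    rcases i with i | i <;> rcases j with j | j <;> simp only [OE, Matrix.of_apply, mul_zero, zero_mul]
    · split_ifs with h
      · rw [zpow_aux p ((s : ℤ) - 1 - 2 * (i : ℤ)) ((s : ℤ) - 1 - 2 * (j : ℤ)) (by omega)]
        have := hz' ((s : ℤ) - 1 - 2 * (j : ℤ))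
        field_simp
      · simp
    · split_ifs with h
      · rw [zpow_aux p (((p - s : ℕ) : ℤ) - 1 - 2 * (i : ℤ)) ((s : ℤ) - 1 - 2 * (j : ℤ) - p) (by omega),
          zpow_aux2 p hp ((s : ℤ) - 1 - 2 * (j : ℤ)) ((s : ℤ) - 1 - 2 * (j : ℤ) - p) (by omega)]
        have := hz' ((s : ℤ) - 1 - 2 * (j : ℤ) - p)
        field_simp
      · simp
    · split_ifs with h
      · rw [zpow_aux p (((p - s : ℕ) : ℤ) - 1 - 2 * (i : ℤ)) (((p - s : ℕ) : ℤ) - 1 - 2 * (j : ℤ)) (by omega)]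
        have := hz' (((p - s : ℕ) : ℤ) - 1 - 2 * (j : ℤ))
        field_simp
      · simp
  · ext i j
    rw [OK, OKinv, Matrix.mul_diagonal, Matrix.diagonal_mul, Matrix.smul_apply, smul_eq_mul]
    rcases i with i | i <;> rcases j with j | j <;> simp only [OF, Matrix.of_apply, mul_zero, zero_mul]
    · split_ifs with h
      · rw [zpow_aux p ((s : ℤ) - 1 - 2 * (j : ℤ)) ((s : ℤ) - 1 - 2 * (i : ℤ)) (by omega)]
        have := hz' ((s : ℤ) - 1 - 2 * (i : ℤ))
        field_simp
      · simp
    · split_ifs with h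
      · rw [zpow_aux2 p hp (((p - s : ℕ) : ℤ) - 1 - 2 * (i : ℤ)) (((p - s : ℕ) : ℤ) - 1 - 2 * (i : ℤ) - p) (by omega),
          zpow_aux p ((s : ℤ) - 1 - 2 * (j : ℤ)) (((p - s : ℕ) : ℤ) - 1 - 2 * (i : ℤ) - p) (by omega)]
        have := hz' (((p - s : ℕ) : ℤ) - 1 - 2 * (i : ℤ) - p)
        field_simp
      · simp
    · split_ifs with h
      · rw [zpow_aux p (((p - s : ℕ) : ℤ) - 1 - 2 * (j : ℤ)) (((p - s : ℕ) : ℤ) - 1 - 2 * (i : ℤ)) (by omega)]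
        have := hz' (((p - s : ℕ) : ℤ) - 1 - 2 * (i : ℤ))
        field_simp
      · simp
  · ext i j
    rw [Matrix.sub_apply, Matrix.smul_apply, Matrix.sub_apply, smul_eq_mul, OK, OKinv,
      Matrix.diagonal_apply, Matrix.diagonal_apply]
    rcases j with j | j
    · rw [EF_inl p s hs1, FE_inl]
      by_cases h : i = Sum.inl j
      · subst h
        simp only [if_true]
        rw [← mul_sub, qint_id p hp s j j.2, mul_inv, hai]
        ring
      · simp [h]
    · rw [EF_inr, FE_inr]
      by_cases h : i = Sum.inr j
      · subst h
        simp only [if_true]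
        rw [← mul_sub, qint_id p hp (p - s) j j.2, mul_inv, inv_neg, hai]
        ring
      · simp [h]
end
end
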